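/- Coherence bound on the pairing with the sign matrix: Let c_γ := (c+γ)/γ. For every S ∈ 𝒮_V with support L, every φ ∈ Ψ_{S,W}, every A ∈ 𝒮_V, and every λ > 0: |⟨sign(S), A − S⟩| ≤ m·√(φ(λ))·‖A − S‖_{L₂(Π²)} + m·√(c_γ·φ(λ)/λ)·‖W^{1/2}(A − S)‖_{L₂(Π²)}, where ⟨·,·⟩ is the Hilbert–Schmidt inner product. -/

import Mathlib

open MeasureTheory Finset
open scoped ENNReal NNReal

noncomputable section

/-- Sample space for one observation: a pair of vertices `(X, X')` and a response `Y`. -/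
abbrev Obs (m : ℕ) := Fin m × Fin m × ℝ

/-- Squared Hilbert–Schmidt (Frobenius) norm of a kernel. -/
def hsNormSq {m : ℕ} (S : Matrix (Fin m) (Fin m) ℝ) : ℝ := ∑ u, ∑ v, (S u v) ^ 2

/-- Squared `L₂(Π²)` norm: `‖S‖²_{L₂(Π²)} = m⁻² ‖S‖₂²`. -/
def l2PiSq {m : ℕ} (S : Matrix (Fin m) (Fin m) ℝ) : ℝ := hsNormSq S / (m : ℝ) ^ 2

/-- Squared Sobolev (Hilbert–Schmidt) norm `‖W^{1/2}S‖₂² = ∑ₖ λₖ ‖S φₖ‖²`,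
expressed through the eigendata `(lam, φ)` of `W` (indexed by `1,…,m`). -/
def sobolevHSSq {m : ℕ} (lam : ℕ → ℝ) (φ : ℕ → Fin m → ℝ)
    (S : Matrix (Fin m) (Fin m) ℝ) : ℝ :=
  ∑ k ∈ Finset.Icc 1 m, lam k * ∑ u, (S.mulVec (φ k) u) ^ 2

/-- `φ₁,…,φ_m` are orthonormal in `ℝ^V` (Euclidean inner product). -/
def OrthonormalFamily (m : ℕ) (φ : ℕ → Fin m → ℝ) : Prop :=
  ∀ j ∈ Finset.Icc 1 m, ∀ k ∈ Finset.Icc 1 m,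
    (∑ v, φ j v * φ k v) = if j = k then (1 : ℝ) else 0

/-- Eigendata of the positive semidefinite kernel `W`: orthonormal eigenfunctions `φ`,
nonnegative nondecreasing eigenvalues `lam` (indexed by `1,…,m`), `k0` the smallest index
of a positive eigenvalue, and `λ_{k+1} ≤ c·λ_k` for `k ≥ k0`. -/
structure IsEigenData (m : ℕ) (c : ℝ) (lam : ℕ → ℝ) (φ : ℕ → Fin m → ℝ) (k0 : ℕ) : Prop where
  orth : OrthonormalFamily m φ
  nonneg : ∀ k ∈ Finset.Icc 1 m, 0 ≤ lam k
  mono : ∀ k l : ℕ, 1 ≤ k → k ≤ l → l ≤ m → lam k ≤ lam l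
  k0_mem : 1 ≤ k0 ∧ k0 ≤ m ∧ 0 < lam k0
  k0_min : ∀ k ∈ Finset.Icc 1 m, 0 < lam k → k0 ≤ k
  ratio : ∀ k : ℕ, k0 ≤ k → k + 1 ≤ m → lam (k + 1) ≤ c * lam k

/-- The design `(X, X')` is uniformly distributed on `V × V`. -/
def UniformDesign (m : ℕ) (P : Measure (Obs m)) : Prop :=
  ∀ u v : Fin m, P {z : Obs m | z.1 = u ∧ z.2.1 = v} = ((m : ℝ≥0∞) ^ 2)⁻¹

/-- The regression kernel `S_P(u,v) = m²·E_P[Y·1{X=u, X'=v}] = E_P(Y | X=u, X'=v)`. -/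
def regKernel (m : ℕ) (P : Measure (Obs m)) : Matrix (Fin m) (Fin m) ℝ :=
  Matrix.of fun u v =>
    (m : ℝ) ^ 2 * ∫ z : Obs m, (if z.1 = u ∧ z.2.1 = v then z.2.2 else 0) ∂P

/-- Membership in the class `𝒫_{r,ρ,a}` of sampling distributions. -/
def MemP (m : ℕ) (r : ℕ) (ρ a : ℝ) (lam : ℕ → ℝ) (φ : ℕ → Fin m → ℝ)
    (P : Measure (Obs m)) : Prop :=
  IsProbabilityMeasure P ∧ UniformDesign m P ∧ (∀ᵐ z ∂P, |z.2.2| ≤ a) ∧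
    (regKernel m P).IsSymm ∧ (regKernel m P).rank ≤ r ∧
    sobolevHSSq lam φ (regKernel m P) ≤ ρ ^ 2 * (m : ℝ) ^ 2


/-- Squared norm of the orthogonal projection of `x` onto the support (= range, for a
symmetric matrix) of `S`. -/
def projSuppNormSq {m : ℕ} (S : Matrix (Fin m) (Fin m) ℝ) (x : Fin m → ℝ) : ℝ :=
  ‖(Submodule.orthogonalProjection (LinearMap.range (Matrix.toEuclideanLin S))
      ((EuclideanSpace.equiv (Fin m) ℝ).symm x) : EuclideanSpace ℝ (Fin m))‖ ^ 2

/-- The coherence function `φ(S;t) := ∑_{λ_j ≤ t} ‖P_L φ_j‖²`, `L = supp(S)`. -/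
def cohFn {m : ℕ} (lam : ℕ → ℝ) (φ : ℕ → Fin m → ℝ) (S : Matrix (Fin m) (Fin m) ℝ)
    (t : ℝ) : ℝ :=
  ∑ j ∈ (Finset.Icc 1 m).filter fun j => lam j ≤ t, projSuppNormSq S (φ j)

/-- The regularized coherence function
`φ̄(S;t) := sup_{0 < σ ≤ t} F̄(σ)·sup_{σ' ≥ σ} φ(S;σ')/F̄(σ')`. -/
def cohBar {m : ℕ} (lam : ℕ → ℝ) (φ : ℕ → Fin m → ℝ) (Fbar : ℝ → ℝ)
    (S : Matrix (Fin m) (Fin m) ℝ) (t : ℝ) : ℝ :=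
  sSup ((fun σ => Fbar σ *
      sSup ((fun σ' => cohFn lam φ S σ' / Fbar σ') '' Set.Ici σ)) '' Set.Ioc 0 t)

/-- `φ̄(S; ε̄⁻¹)`, with the convention `φ̄(S; +∞) := rank S` when `ε̄ = 0`. -/
def cohBarInv {m : ℕ} (lam : ℕ → ℝ) (φ : ℕ → Fin m → ℝ) (Fbar : ℝ → ℝ)
    (S : Matrix (Fin m) (Fin m) ℝ) (ebar : ℝ) : ℝ :=
  if ebar = 0 then (S.rank : ℝ) else cohBar lam φ Fbar S ebar⁻¹

/-- The nuclear norm of a symmetric matrix: the sum of absolute values of its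
eigenvalues. -/
def nuclearNorm {m : ℕ} (S : Matrix (Fin m) (Fin m) ℝ) : ℝ :=
  if h : S.IsHermitian then ∑ i, |h.eigenvalues i| else 0

/-- The spectral function `F(t) := #{j : λ_j ≤ t}`. -/
def specFn (m : ℕ) (lam : ℕ → ℝ) (t : ℝ) : ℕ :=
  ((Finset.Icc 1 m).filter fun j => lam j ≤ t).card

/-- `F̄` is a regularized majorant of the spectral function `F`: nondecreasing,
`F ≤ F̄`, `t ↦ F̄(t)/t` nonincreasing, `∫_t^∞ F̄(s)s⁻² ds ≤ γ⁻¹ F̄(t)/t`, and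
`F̄(t) = m` for `t ≥ λ_m`. -/
structure IsSpectralMajorant (m : ℕ) (γ : ℝ) (lam : ℕ → ℝ) (Fbar : ℝ → ℝ) : Prop where
  pos : ∀ t : ℝ, 0 < t → 0 < Fbar t
  mono : ∀ s t : ℝ, 0 < s → s ≤ t → Fbar s ≤ Fbar t
  majorant : ∀ t : ℝ, 0 < t → (specFn m lam t : ℝ) ≤ Fbar t
  ratio_anti : ∀ s t : ℝ, 0 < s → s ≤ t → Fbar t / t ≤ Fbar s / s
  integral : ∀ t : ℝ, 0 < t → (∫ s in Set.Ioi t, Fbar s / s ^ 2) ≤ γ⁻¹ * Fbar t / t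
  top : ∀ t : ℝ, lam m ≤ t → Fbar t = m

/-- The quantity `t_{n,m} = t + 3 log(2 log₂ n + ½ log₂(λ_m/λ̃) + 2)`. -/
def tnm (n m : ℕ) (t lamTilde : ℝ) (lam : ℕ → ℝ) : ℝ :=
  t + 3 * Real.log (2 * Real.logb 2 n + (1 / 2) * Real.logb 2 (lam m / lamTilde) + 2)

/-- `(μ, ψ)` is a spectral representation `S = ∑ᵢ μᵢ (ψᵢ ⊗ ψᵢ)` of the symmetric
kernel `S`, with `ψ₁,…,ψ_m` orthonormal. -/
def SpectralRep (m : ℕ) (S : Matrix (Fin m) (Fin m) ℝ) (μ : ℕ → ℝ)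
    (ψ : ℕ → Fin m → ℝ) : Prop :=
  OrthonormalFamily m ψ ∧
    S = Matrix.of fun u v => ∑ i ∈ Finset.Icc 1 m, μ i * ψ i u * ψ i v

/-- `‖P_L x‖²` for `L = supp(S) = l.s.{ψᵢ : μᵢ ≠ 0}`, computed from the spectral data. -/
def projNormSqData {m : ℕ} (μ : ℕ → ℝ) (ψ : ℕ → Fin m → ℝ) (x : Fin m → ℝ) : ℝ :=
  ∑ i ∈ (Finset.Icc 1 m).filter fun i => μ i ≠ 0, (∑ v, x v * ψ i v) ^ 2

/-- The coherence function `φ(S;t) := ∑_{λ_j ≤ t} ‖P_L φ_j‖²`, from the spectral data. -/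
def cohFnData {m : ℕ} (lam : ℕ → ℝ) (φ : ℕ → Fin m → ℝ) (μ : ℕ → ℝ)
    (ψ : ℕ → Fin m → ℝ) (t : ℝ) : ℝ :=
  ∑ j ∈ (Finset.Icc 1 m).filter fun j => lam j ≤ t, projNormSqData μ ψ (φ j)

/-- Membership of `φfun` in the class `Ψ_{S,W}`: `φfun` is nonnegative and nondecreasing
on `(0,∞)`, dominates the coherence function `φ(S;·)`, and `φfun/F̄` is nonincreasing. -/
def MemPsi {m : ℕ} (lam : ℕ → ℝ) (φ : ℕ → Fin m → ℝ) (Fbar : ℝ → ℝ) (μ : ℕ → ℝ)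
    (ψ : ℕ → Fin m → ℝ) (φfun : ℝ → ℝ) : Prop :=
  (∀ t : ℝ, 0 < t → 0 ≤ φfun t) ∧
  (∀ s t : ℝ, 0 < s → s ≤ t → φfun s ≤ φfun t) ∧
  (∀ t : ℝ, 0 < t → cohFnData lam φ μ ψ t ≤ φfun t) ∧
  (∀ s t : ℝ, 0 < s → s ≤ t → φfun t / Fbar t ≤ φfun s / Fbar s)

/-- The Hilbert–Schmidt inner product of two kernels. -/
def hsInner {m : ℕ} (A B : Matrix (Fin m) (Fin m) ℝ) : ℝ := ∑ u, ∑ v, A u v * B u v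

/-- `sign(S) := ∑ᵢ sign(μᵢ) (ψᵢ ⊗ ψᵢ)`, from the spectral data of `S`. -/
def signMatData {m : ℕ} (μ : ℕ → ℝ) (ψ : ℕ → Fin m → ℝ) : Matrix (Fin m) (Fin m) ℝ :=
  Matrix.of fun u v => ∑ i ∈ Finset.Icc 1 m, Real.sign (μ i) * ψ i u * ψ i v

/-!
Expand the pairing of `sign(S)` with `B` in the eigenbasis of `W`, as `∑ⱼ ⟨sign(S) φⱼ, B φⱼ⟩`, and
split it at `λⱼ = t`. Since `‖sign(S) φⱼ‖ = ‖P_L φⱼ‖`, Cauchy–Schwarz bounds the part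
`λⱼ ≤ t` by `√φ(S;t) · ‖B‖₂` and, with weights `λⱼ`, the part `λⱼ > t` by
`√(∑_{λⱼ > t} ‖P_L φⱼ‖² / λⱼ) · ‖W^{1/2} B‖₂`. Writing `1 / λⱼ = ∫_{λⱼ}^∞ s⁻² ds` turns the last sum
into the integral over `(t, ∞)` of a function bounded by `φ(S;s) / s²`. There
`φ(S;s) ≤ φ(s) ≤ (φ(t) / F̄(t)) F̄(s)`, and the tail condition on `F̄` bounds it by `γ⁻¹ φ(t) / t`.
-/

section Pairing

open scoped Matrix

theorem real_sign_sq (r : ℝ) : Real.sign r ^ 2 = if r ≠ 0 then 1 else 0 := by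
  obtain hr | rfl | hr := lt_trichotomy r 0
  · simp [Real.sign_of_neg hr, hr.ne]
  · simp
  · simp [Real.sign_of_pos hr, hr.ne']

theorem abs_sum_dotProduct_le_sqrt_mul_sqrt {ι κ : Type*} [Fintype κ] (s : Finset ι)
    {w : ι → ℝ} (hw : ∀ j ∈ s, 0 < w j) (f g : ι → κ → ℝ) :
    |∑ j ∈ s, f j ⬝ᵥ g j| ≤
      √(∑ j ∈ s, f j ⬝ᵥ f j / w j) * √(∑ j ∈ s, w j * (g j ⬝ᵥ g j)) := by
  have ratio_nonneg : ∀ j ∈ s, 0 ≤ f j ⬝ᵥ f j / w j := fun j hj =>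
    div_nonneg (dotProduct_star_self_nonneg _) (hw j hj).le
  rw [← Real.sqrt_mul (sum_nonneg ratio_nonneg)]
  refine Real.abs_le_sqrt (sum_sq_le_sum_mul_sum_of_sq_le_mul s ratio_nonneg
    (fun j hj => mul_nonneg (hw j hj).le (dotProduct_star_self_nonneg _)) fun j hj => ?_)
  calc (f j ⬝ᵥ g j) ^ 2
      ≤ (f j ⬝ᵥ f j) * (g j ⬝ᵥ g j) := by
        simpa only [dotProduct, sq] using sum_mul_sq_le_sq_mul_sq univ (f j) (g j)
    _ = f j ⬝ᵥ f j / w j * (w j * (g j ⬝ᵥ g j)) := by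
        have := (hw j hj).ne'
        field_simp

variable {m : ℕ} {φ : ℕ → Fin m → ℝ}

theorem OrthonormalFamily.sum_dotProduct_mul_dotProduct (hφ : OrthonormalFamily m φ)
    (x y : Fin m → ℝ) :
    ∑ j ∈ Icc 1 m, (x ⬝ᵥ φ j) * (y ⬝ᵥ φ j) = x ⬝ᵥ y := by
  let U : Matrix (Icc 1 m) (Fin m) ℝ := Matrix.of fun j => φ j
  have rows_orthonormal : U * Uᵀ = 1 := by
    ext j k
    simp only [Matrix.one_apply, Subtype.ext_iff]
    exact hφ j j.2 k k.2
  have columns_orthonormal : Uᵀ * U = 1 :=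
    (Matrix.mul_eq_one_comm_of_card_eq _ _ _ (by simp)).mp rows_orthonormal
  calc ∑ j ∈ Icc 1 m, (x ⬝ᵥ φ j) * (y ⬝ᵥ φ j)
      = (U *ᵥ x) ⬝ᵥ (U *ᵥ y) := by
        rw [← sum_coe_sort]
        exact sum_congr rfl fun j _ => by rw [dotProduct_comm x, dotProduct_comm y]; rfl
    _ = x ⬝ᵥ y := by
        rw [Matrix.dotProduct_mulVec, ← Matrix.vecMul_transpose, Matrix.vecMul_vecMul,
          columns_orthonormal, Matrix.vecMul_one]

theorem OrthonormalFamily.hsInner_eq_sum (hφ : OrthonormalFamily m φ)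
    (A B : Matrix (Fin m) (Fin m) ℝ) :
    hsInner A B = ∑ j ∈ Icc 1 m, (A *ᵥ φ j) ⬝ᵥ (B *ᵥ φ j) :=
  calc hsInner A B
      = ∑ u, ∑ j ∈ Icc 1 m, (A u ⬝ᵥ φ j) * (B u ⬝ᵥ φ j) :=
        sum_congr rfl fun u _ => (hφ.sum_dotProduct_mul_dotProduct (A u) (B u)).symm
    _ = ∑ j ∈ Icc 1 m, (A *ᵥ φ j) ⬝ᵥ (B *ᵥ φ j) := sum_comm

theorem OrthonormalFamily.hsNormSq_eq_sum (hφ : OrthonormalFamily m φ)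
    (B : Matrix (Fin m) (Fin m) ℝ) :
    hsNormSq B = ∑ j ∈ Icc 1 m, (B *ᵥ φ j) ⬝ᵥ (B *ᵥ φ j) := by
  rw [← hφ.hsInner_eq_sum]
  simp only [hsNormSq, hsInner, sq]

variable (φ) in
theorem sobolevHSSq_eq_sum (lam : ℕ → ℝ) (B : Matrix (Fin m) (Fin m) ℝ) :
    sobolevHSSq lam φ B = ∑ j ∈ Icc 1 m, lam j * ((B *ᵥ φ j) ⬝ᵥ (B *ᵥ φ j)) := by
  simp only [sobolevHSSq, dotProduct, sq]

variable (μ : ℕ → ℝ) (ψ : ℕ → Fin m → ℝ)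

theorem signMatData_eq_sum :
    signMatData μ ψ = ∑ i ∈ Icc 1 m, Real.sign (μ i) • Matrix.vecMulVec (ψ i) (ψ i) := by
  ext u v
  simp [signMatData, Matrix.sum_apply, Matrix.vecMulVec_apply, mul_assoc]

theorem signMatData_isSymm : (signMatData μ ψ).IsSymm := by
  simp [Matrix.IsSymm, signMatData_eq_sum, Matrix.transpose_sum, Matrix.transpose_vecMulVec]

variable {ψ}

theorem signMatData_mulVec_eigenvector (hψ : OrthonormalFamily m ψ) {i : ℕ} (hi : i ∈ Icc 1 m) :
    signMatData μ ψ *ᵥ ψ i = Real.sign (μ i) • ψ i := by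
  have dotProduct_eq : ∀ k ∈ Icc 1 m, ψ k ⬝ᵥ ψ i = if k = i then 1 else 0 :=
    fun k hk => hψ k hk i hi
  rw [signMatData_eq_sum, Matrix.sum_mulVec, sum_eq_single_of_mem i hi]
  · simp [Matrix.smul_mulVec, Matrix.vecMulVec_mulVec, dotProduct_eq i hi]
  · intro k hk hki
    simp [Matrix.smul_mulVec, Matrix.vecMulVec_mulVec, dotProduct_eq k hk, hki]

theorem signMatData_mulVec_dotProduct_self (hψ : OrthonormalFamily m ψ) (x : Fin m → ℝ) :
    (signMatData μ ψ *ᵥ x) ⬝ᵥ (signMatData μ ψ *ᵥ x) = projNormSqData μ ψ x := by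
  have coordinate : ∀ i ∈ Icc 1 m,
      (signMatData μ ψ *ᵥ x) ⬝ᵥ ψ i = Real.sign (μ i) * (x ⬝ᵥ ψ i) := fun i hi => by
    rw [dotProduct_comm, Matrix.dotProduct_mulVec, ← Matrix.mulVec_transpose,
      (signMatData_isSymm μ ψ).eq, signMatData_mulVec_eigenvector μ hψ hi, smul_dotProduct,
      smul_eq_mul, dotProduct_comm]
  rw [← hψ.sum_dotProduct_mul_dotProduct, projNormSqData, sum_filter]
  refine sum_congr rfl fun i hi => ?_
  rw [coordinate i hi, ← sq, mul_pow, real_sign_sq, ite_mul, one_mul, zero_mul]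
  rfl

theorem abs_hsInner_le_of_spectral_cutoff {lam : ℕ → ℝ} {t : ℝ}
    (hφ : OrthonormalFamily m φ) (hlam : ∀ k ∈ Icc 1 m, 0 ≤ lam k) (ht : 0 < t)
    (G B : Matrix (Fin m) (Fin m) ℝ) :
    |hsInner G B| ≤
      √(∑ j ∈ Icc 1 m with lam j ≤ t, (G *ᵥ φ j) ⬝ᵥ (G *ᵥ φ j)) * √(hsNormSq B) +
      √(∑ j ∈ Icc 1 m with t < lam j, (G *ᵥ φ j) ⬝ᵥ (G *ᵥ φ j) / lam j) *
        √(sobolevHSSq lam φ B) := by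
  rw [hφ.hsInner_eq_sum, ← sum_filter_add_sum_filter_not _ (fun j => lam j ≤ t)]
  simp only [not_le]
  refine (abs_add_le _ _).trans (add_le_add ?low ?high)
  case low =>
    refine (abs_sum_dotProduct_le_sqrt_mul_sqrt _ (w := 1) (by simp) _ _).trans ?_
    simp only [Pi.one_apply, div_one, one_mul]
    rw [hφ.hsNormSq_eq_sum]
    gcongr
    · exact fun j _ _ => dotProduct_star_self_nonneg _
    · exact filter_subset _ _
  case high =>
    refine (abs_sum_dotProduct_le_sqrt_mul_sqrt _
      (fun j hj => ht.trans (mem_filter.mp hj).2) _ _).trans ?_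
    rw [sobolevHSSq_eq_sum]
    gcongr
    · exact fun j hj _ => mul_nonneg (hlam j hj) (dotProduct_star_self_nonneg _)
    · exact filter_subset _ _

end Pairing

section Tail

theorem rpow_neg_two_eqOn_inv_sq {a : ℝ} (ha : 0 ≤ a) :
    Set.EqOn (fun u : ℝ => u ^ (-2 : ℝ)) (fun u => (u ^ 2)⁻¹) (Set.Ioi a) := fun u hu => by
  simp [Real.rpow_neg (ha.trans_lt hu).le]

theorem integrableOn_Ioi_inv_sq {a : ℝ} (ha : 0 < a) :
    IntegrableOn (fun u : ℝ => (u ^ 2)⁻¹) (Set.Ioi a) :=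
  (integrableOn_Ioi_rpow_of_lt (by norm_num) ha).congr_fun (rpow_neg_two_eqOn_inv_sq ha.le)
    measurableSet_Ioi

theorem integral_Ioi_inv_sq {a : ℝ} (ha : 0 < a) : ∫ u in Set.Ioi a, (u ^ 2)⁻¹ = a⁻¹ := by
  rw [← setIntegral_congr_fun measurableSet_Ioi (rpow_neg_two_eqOn_inv_sq ha.le),
    integral_Ioi_rpow_of_lt (by norm_num) ha]
  norm_num [Real.rpow_neg_one]

theorem integral_Ioi_indicator_Ioi_inv_sq {t a : ℝ} (ht : 0 < t) (hta : t < a) :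
    ∫ u in Set.Ioi t, (Set.Ioi a).indicator (fun u : ℝ => (u ^ 2)⁻¹) u = a⁻¹ := by
  rw [setIntegral_indicator measurableSet_Ioi,
    Set.inter_eq_right.mpr (Set.Ioi_subset_Ioi hta.le), integral_Ioi_inv_sq (ht.trans hta)]

theorem sum_div_le_integral_of_cumulative_le {ι : Type*} {s : Finset ι} {p x : ι → ℝ}
    (hp : ∀ j ∈ s, 0 ≤ p j) {t : ℝ} (ht : 0 < t) {F : ℝ → ℝ}
    (hF : IntegrableOn (fun u => F u / u ^ 2) (Set.Ioi t))
    (hcum : ∀ u, t < u → ∑ j ∈ s with x j ≤ u, p j ≤ F u) :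
    ∑ j ∈ s with t < x j, p j / x j ≤ ∫ u in Set.Ioi t, F u / u ^ 2 := by
  let tail (a : ℝ) : ℝ → ℝ := (Set.Ioi a).indicator fun u => (u ^ 2)⁻¹
  have tail_integrable : ∀ j, IntegrableOn (fun u => p j * tail (x j) u) (Set.Ioi t) := fun j =>
    ((integrableOn_Ioi_inv_sq ht).indicator measurableSet_Ioi).const_mul (p j)
  have tail_sum_le : ∀ u ∈ Set.Ioi t,
      ∑ j ∈ s with t < x j, p j * tail (x j) u ≤ F u / u ^ 2 := fun u hu => by
    rw [div_eq_mul_inv]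
    refine le_trans ?_ (mul_le_mul_of_nonneg_right (hcum u hu) (inv_nonneg.mpr (sq_nonneg u)))
    rw [sum_mul, sum_filter, sum_filter]
    refine sum_le_sum fun j hj => ?_
    have := mul_nonneg (hp j hj) (inv_nonneg.mpr (sq_nonneg u))
    simp only [tail, Set.indicator_apply, Set.mem_Ioi]
    grind
  calc ∑ j ∈ s with t < x j, p j / x j
      = ∑ j ∈ s with t < x j, ∫ u in Set.Ioi t, p j * tail (x j) u := by
        refine sum_congr rfl fun j hj => ?_
        rw [integral_const_mul, integral_Ioi_indicator_Ioi_inv_sq ht (mem_filter.mp hj).2,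
          div_eq_mul_inv]
    _ = ∫ u in Set.Ioi t, ∑ j ∈ s with t < x j, p j * tail (x j) u :=
        (integral_finsetSum _ fun j _ => tail_integrable j).symm
    _ ≤ ∫ u in Set.Ioi t, F u / u ^ 2 :=
        setIntegral_mono_on (integrable_finsetSum _ fun j _ => tail_integrable j) hF
          measurableSet_Ioi tail_sum_le

theorem integrableOn_Ioi_div_sq {F : ℝ → ℝ} {t C : ℝ} (ht : 0 < t)
    (hmono : MonotoneOn F (Set.Ioi t)) (hbound : ∀ u, t < u → |F u| ≤ C) :
    IntegrableOn (fun u => F u / u ^ 2) (Set.Ioi t) := by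
  have hF : AEStronglyMeasurable F (volume.restrict (Set.Ioi t)) :=
    (aemeasurable_restrict_of_monotoneOn measurableSet_Ioi hmono).aestronglyMeasurable
  simp only [div_eq_mul_inv]
  exact (integrableOn_Ioi_inv_sq ht).bdd_mul hF
    ((ae_restrict_iff' measurableSet_Ioi).mpr (.of_forall hbound))

end Tail

section Coherence

variable {m : ℕ} {γ : ℝ} {lam : ℕ → ℝ} {φ ψ : ℕ → Fin m → ℝ} {Fbar φfun : ℝ → ℝ} {μ : ℕ → ℝ} {t : ℝ}

theorem IsSpectralMajorant.le_natCast (hF : IsSpectralMajorant m γ lam Fbar) (ht : 0 < t) :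
    Fbar t ≤ m :=
  (hF.mono t (max t (lam m)) ht (le_max_left _ _)).trans_eq (hF.top _ (le_max_right _ _))

theorem IsSpectralMajorant.integrableOn_div_sq (hF : IsSpectralMajorant m γ lam Fbar)
    (ht : 0 < t) : IntegrableOn (fun u => Fbar u / u ^ 2) (Set.Ioi t) :=
  integrableOn_Ioi_div_sq ht (fun u hu v _ huv => hF.mono u v (ht.trans hu) huv) fun u hu => by
    rw [abs_of_pos (hF.pos u (ht.trans hu))]
    exact hF.le_natCast (ht.trans hu)

theorem projNormSqData_nonneg (x : Fin m → ℝ) : 0 ≤ projNormSqData μ ψ x :=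
  sum_nonneg fun _ _ => sq_nonneg _

theorem MemPsi.sum_projNormSqData_div_le (hΨ : MemPsi lam φ Fbar μ ψ φfun)
    (hF : IsSpectralMajorant m γ lam Fbar) (ht : 0 < t) :
    ∑ j ∈ Icc 1 m with t < lam j, projNormSqData μ ψ (φ j) / lam j ≤ γ⁻¹ * (φfun t / t) := by
  obtain ⟨hnonneg, -, hcoh, hanti⟩ := hΨ
  have hFt : 0 < Fbar t := hF.pos t ht
  have coherence_le : ∀ u, t < u →
      cohFnData lam φ μ ψ u ≤ φfun t / Fbar t * Fbar u := fun u hu =>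
    (hcoh u (ht.trans hu)).trans
      ((div_le_iff₀ (hF.pos u (ht.trans hu))).mp (hanti t u ht hu.le))
  calc ∑ j ∈ Icc 1 m with t < lam j, projNormSqData μ ψ (φ j) / lam j
      ≤ ∫ u in Set.Ioi t, φfun t / Fbar t * Fbar u / u ^ 2 :=
        sum_div_le_integral_of_cumulative_le (fun _ _ => projNormSqData_nonneg _) ht
          (by simpa only [IntegrableOn, mul_div_assoc] using
            (hF.integrableOn_div_sq ht).const_mul _)
          coherence_le
    _ = φfun t / Fbar t * ∫ u in Set.Ioi t, Fbar u / u ^ 2 := by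
        simp only [mul_div_assoc, integral_const_mul]
    _ ≤ φfun t / Fbar t * (γ⁻¹ * Fbar t / t) :=
        mul_le_mul_of_nonneg_left (hF.integral t ht) (div_nonneg (hnonneg t ht) hFt.le)
    _ = γ⁻¹ * (φfun t / t) := by field_simp

theorem abs_hsInner_signMatData_le (hφ : OrthonormalFamily m φ)
    (hlam : ∀ k ∈ Icc 1 m, 0 ≤ lam k) (hF : IsSpectralMajorant m γ lam Fbar)
    (hψ : OrthonormalFamily m ψ) (hΨ : MemPsi lam φ Fbar μ ψ φfun)
    (B : Matrix (Fin m) (Fin m) ℝ) (ht : 0 < t) :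
    |hsInner (signMatData μ ψ) B| ≤
      √(φfun t) * √(hsNormSq B) + √(γ⁻¹ * (φfun t / t)) * √(sobolevHSSq lam φ B) := by
  refine (abs_hsInner_le_of_spectral_cutoff hφ hlam ht _ B).trans ?_
  simp only [signMatData_mulVec_dotProduct_self μ hψ]
  gcongr
  · exact hΨ.2.2.1 t ht
  · exact hΨ.sum_projNormSqData_div_le hF ht

theorem sqrt_eq_natCast_mul_sqrt_div_sq {n : ℕ} (hn : 1 ≤ n) (x : ℝ) :
    √x = n * √(x / (n : ℝ) ^ 2) := by
  have hn' : (0 : ℝ) < n := by exact_mod_cast hn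
  rw [Real.sqrt_div' _ (by positivity), Real.sqrt_sq hn'.le, mul_div_cancel₀ _ hn'.ne']

theorem sign_pairing_bound_general (hm : 1 ≤ m) (hφ : OrthonormalFamily m φ)
    (hlam : ∀ k ∈ Icc 1 m, 0 ≤ lam k) (hF : IsSpectralMajorant m γ lam Fbar)
    (hψ : OrthonormalFamily m ψ) (hΨ : MemPsi lam φ Fbar μ ψ φfun)
    (B : Matrix (Fin m) (Fin m) ℝ) (ht : 0 < t) :
    |hsInner (signMatData μ ψ) B| ≤
      m * √(φfun t) * √(l2PiSq B) +
        m * √(γ⁻¹ * (φfun t / t)) * √(sobolevHSSq lam φ B / (m : ℝ) ^ 2) := by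
  refine (abs_hsInner_signMatData_le hφ hlam hF hψ hΨ B ht).trans_eq ?_
  rw [sqrt_eq_natCast_mul_sqrt_div_sq hm (hsNormSq B),
    sqrt_eq_natCast_mul_sqrt_div_sq hm (sobolevHSSq lam φ B), l2PiSq]
  ring

end Coherence

/-- **Coherence bound on the pairing with the sign matrix.** -/
theorem sign_pairing_bound (c γ : ℝ) (hc : 1 ≤ c) (hγ0 : 0 < γ) (hγ1 : γ < 1) :
    ∀ (m k0 : ℕ) (lam : ℕ → ℝ) (φ : ℕ → Fin m → ℝ) (Fbar : ℝ → ℝ)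
      (S A : Matrix (Fin m) (Fin m) ℝ) (μ : ℕ → ℝ) (ψ : ℕ → Fin m → ℝ) (φfun : ℝ → ℝ),
      1 ≤ m →
      IsEigenData m c lam φ k0 →
      IsSpectralMajorant m γ lam Fbar →
      SpectralRep m S μ ψ →
      MemPsi lam φ Fbar μ ψ φfun →
      A.IsSymm →
      ∀ t : ℝ, 0 < t →
        |hsInner (signMatData μ ψ) (A - S)| ≤
          (m : ℝ) * Real.sqrt (φfun t) * Real.sqrt (l2PiSq (A - S)) +
            (m : ℝ) * Real.sqrt ((c + γ) / γ * (φfun t / t)) *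
              Real.sqrt (sobolevHSSq lam φ (A - S) / (m : ℝ) ^ 2) := by
  intro m k0 lam φ Fbar S A μ ψ φfun hm hE hF hS hΨ _ t ht
  have hφt : 0 ≤ φfun t := hΨ.1 t ht
  have inv_le : γ⁻¹ ≤ (c + γ) / γ := by field_simp; linarith
  exact (sign_pairing_bound_general hm hE.orth hE.nonneg hF hS.1 hΨ (A - S) ht).trans (by gcongr)

end
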